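/- Let A be a structurable division algebra over a field k with char(k) ≠ 2 and char(k) ≠ 3, let (x,s) ∈ A × S with (x,s) ≠ (0,0), and let (u,t) ∈ A × S satisfy the one-invertibility system: {x,u,z} = z + s·(t·z) for all z ∈ A, s·u = −(1/3)·U_x(t·x), and ψ(x, s·(t·x)) = 0. Set z₀ := u + t·x and define P : A → A by P(a) := U_x(a + (2/3)·ψ(z₀,a)·x) + s·(a + 2·ψ(z₀,a)·x). Then for every r ∈ S: (1/6)·ψ(x, U_x(r·x)) + ψ(x, s·(r·x)) − s·(r·s) = (1/2)·ψ(P(r), P(1)). -/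

import Mathlib

/-- The triple product `{x,y,z} := (x·ȳ)·z + (z·ȳ)·x − (z·x̄)·y` of a (not necessarily
associative or commutative) unital algebra `A` equipped with an involution `bar`. -/
def strTrip {A : Type*} [NonAssocRing A] (bar : A → A) (x y z : A) : A :=
  x * bar y * z + z * bar y * x - z * bar x * y

/-- `ψ(x,y) := x·ȳ − y·x̄`. -/
def strPsi {A : Type*} [NonAssocRing A] (bar : A → A) (x y : A) : A :=
  x * bar y - y * bar x

/-- `q_x(s) := (1/6)·ψ(x, U_x(s·x))`, where `U_x y := {x,y,x}`. -/
noncomputable def strQ (k : Type*) [Field k] {A : Type*} [NonAssocRing A] [Module k A]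
    (bar : A → A) (x s : A) : A :=
  (6 : k)⁻¹ • strPsi bar x (strTrip bar x (s * x) x)

/-- `(A, bar)` is a structurable algebra over `k`: `bar` is a `k`-linear involutive
anti-automorphism of `A`, and the operator identity
`[V_{x,y}, V_{z,w}] = V_{{x,y,z},w} − V_{z,{y,x,w}}` holds, where
`V_{x,y} z := strTrip bar x y z`. -/
def IsStructurable (k : Type*) [Field k] (A : Type*) [NonAssocRing A] [Module k A]
    (bar : A → A) : Prop :=
  (∀ x y : A, bar (x + y) = bar x + bar y) ∧
  (∀ (c : k) (x : A), bar (c • x) = c • bar x) ∧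
  (∀ x y : A, bar (x * y) = bar y * bar x) ∧
  (∀ x : A, bar (bar x) = x) ∧
  (∀ x y z w a : A,
    strTrip bar x y (strTrip bar z w a) - strTrip bar z w (strTrip bar x y a)
      = strTrip bar (strTrip bar x y z) w a - strTrip bar z (strTrip bar y x w) a)

/-- `A` is a (conjugate) division algebra: every nonzero `u ∈ A` has a conjugate
inverse `v`, i.e. `V_{u,v} = id`. -/
def IsConjDivision {A : Type*} [NonAssocRing A] (bar : A → A) : Prop :=
  ∀ u : A, u ≠ 0 → ∃ v : A, ∀ z : A, strTrip bar u v z = z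

/-- `P(a) := U_x(a + (2/3)·ψ(z₀,a)·x) + s·(a + 2·ψ(z₀,a)·x)`. -/
noncomputable def strP (k : Type*) [Field k] {A : Type*} [NonAssocRing A] [Module k A]
    (bar : A → A) (x s z₀ a : A) : A :=
  strTrip bar x (a + ((2 : k) / 3) • (strPsi bar z₀ a * x)) x
    + s * (a + (2 : k) • (strPsi bar z₀ a * x))

/-!
Attach to `A` its Kantor Lie algebra `S₋₂ ⊕ A₋₁ ⊕ L₀ ⊕ A₁ ⊕ S₂`, and to `(x, s)` the commuting
derivations `D = ad x` and `S = -ad s`. The formal exponential `exp (λ D + λ² S / 2)` preserves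
brackets. Let `Eᵢ` be `i!` times its coefficient of `λⁱ`. Expanding, `E₄ r`, for `r` in degree `-2`,
is six times the left hand side of the formula, placed in degree `2`.

The one-invertibility system says that the images of `z = u + t x` (in degree `-1`) and of `t` (in
degree `-2`) under the `Eᵢ` reproduce `x`, `s` and the grading element. Bracketing with them gives
`E₄ ⁅z, a⁆ = 2 E₃ a` for all `a` in degree `-1`, while `E₂ a - (2 / 3) E₃ ⁅z, a⁆ = -P a`. So the
image of `a - 2 ⁅z, a⁆` under `exp (D + S / 2)` has degree `1` part `-P a / 2` and degree `2` part
`0`, and comparing the degree `2` parts of the images of `⁅r, 1⁆ = 2 r` gives the formula.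

The vanishing brackets `⁅A₋₁, S₋₂⁆` and `⁅S₋₂, S₋₂⁆` are used in weights five and six, where the
Leibniz expansions carry a factor `5`. In characteristic `5`, an `sl₂`-triple through `x`, given by
the conjugate inverse of `x`, replaces the division by `5`.
-/

/-! ### Exponentials of commuting derivations -/

section Lowering

variable {R L : Type*} [CommRing R] [LieRing L] [LieAlgebra R L]

/-- The derivations `F` and `Z` behave towards `D` like the lowering and the grading element of an
`sl₂`-triple behave towards its raising element. -/
structure IsLowering (D F Z : LieDerivation R L L) : Prop where
  F_D (v : L) : F (D v) = D (F v) - Z v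
  Z_D (v : L) : Z (D v) = D (Z v) + D v

namespace IsLowering

variable {D F Z : LieDerivation R L L} {a b : L}

theorem F_DD (h : IsLowering D F Z) (hF : F b = 0) (hZ : Z b = -(2 • b)) :
    F (D (D b)) = 3 • D b := by
  simp only [h.F_D, h.Z_D, hF, hZ, map_sub, map_neg, map_nsmul, map_zero]
  module

theorem F_DDD (h : IsLowering D F Z) (hF : F b = 0) (hZ : Z b = -(2 • b)) :
    F (D (D (D b))) = 3 • D (D b) := by
  simp only [h.F_D (D (D b)), h.F_DD hF hZ, h.Z_D, hZ, map_add, map_neg, map_nsmul]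
  module

theorem F_DDDD (h : IsLowering D F Z) (hF : F b = 0) (hZ : Z b = -(2 • b)) :
    F (D (D (D (D b)))) = 2 • D (D (D b)) := by
  simp only [h.F_D (D (D (D b))), h.F_DDD hF hZ, h.Z_D, hZ, map_add, map_neg, map_nsmul]
  module

theorem F_DD_of_neg_one (h : IsLowering D F Z) (hZ : Z a = -a) :
    F (D (D a)) = D (D (F a)) + D a := by
  simp only [h.F_D, h.Z_D, hZ, map_sub, map_neg]
  module

theorem two_nsmul_DDD (h : IsLowering D F Z) (hZ : Z a = -a) (ha : D (D (D (D a))) = 0) :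
    2 • D (D (D a)) = D (D (D (D (F a)))) := by
  have e := congrArg F ha
  simp only [h.F_D, h.Z_D, hZ, map_add, map_sub, map_neg, map_zero] at e
  linear_combination (norm := module) -e

theorem lie_DD_DDDD (h : IsLowering D F Z) (hFa : F a = 0) (hZa : Z a = -(2 • a)) (hFb : F b = 0)
    (hZb : Z b = -(2 • b)) (hab : ⁅D (D (D a)), D (D (D (D b)))⁆ = 0) :
    3 • ⁅D (D a), D (D (D (D b)))⁆ + 2 • ⁅D (D (D a)), D (D (D b))⁆ = 0 := by
  have e := congrArg F hab
  rwa [LieDerivation.apply_lie_eq_add, h.F_DDD hFa hZa, h.F_DDDD hFb hZb, nsmul_lie,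
    lie_nsmul, map_zero, add_comm] at e

theorem weight_six (h : IsLowering D F Z) (hFa : F a = 0) (hZa : Z a = -(2 • a)) (hFb : F b = 0)
    (hZb : Z b = -(2 • b)) (hab : ⁅D (D (D a)), D (D (D (D b)))⁆ = 0)
    (hba : ⁅D (D (D b)), D (D (D (D a)))⁆ = 0) :
    3 • ⁅D (D a), D (D (D (D b)))⁆ + 4 • ⁅D (D (D a)), D (D (D b))⁆
      + 3 • ⁅D (D (D (D a))), D (D b)⁆ = 0 := by
  have e := h.lie_DD_DDDD hFa hZa hFb hZb hab
  have e' := h.lie_DD_DDDD hFb hZb hFa hZa hba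
  rw [← lie_skew (D (D (D b))), ← lie_skew (D (D b))] at e'
  linear_combination (norm := module) e - e'

theorem weight_five [IsDomain R] [Module.IsTorsionFree R L] (h3 : (3 : R) ≠ 0)
    (h : IsLowering D F Z) (hFa : F (F a) = 0) (hZFa : Z (F a) = -(2 • F a)) (hZa : Z a = -a)
    (ha : D (D (D (D a))) = 0) (hFb : F b = 0) (hZb : Z b = -(2 • b))
    (hab : ⁅D (D a), D (D (D (D b)))⁆ = 0) (hFab : ⁅D (D (D (F a))), D (D (D (D b)))⁆ = 0)
    (hbFa : ⁅D (D (D b)), D (D (D (D (F a))))⁆ = 0) :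
    ⁅D a, D (D (D (D b)))⁆ + 2 • ⁅D (D a), D (D (D b))⁆ + 2 • ⁅D (D (D a)), D (D b)⁆ = 0 := by
  have e := congrArg F hab
  have e₁ := h.lie_DD_DDDD hFa hZFa hFb hZb hFab
  have e₂ := h.lie_DD_DDDD hFb hZb hFa hZFa hbFa
  have e₃ := congrArg (⁅·, D (D b)⁆) (h.two_nsmul_DDD hZa ha)
  rw [LieDerivation.apply_lie_eq_add, h.F_DD_of_neg_one hZa, h.F_DDDD hFb hZb, add_lie,
    lie_nsmul, map_zero] at e
  simp only [nsmul_lie] at e₃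
  rw [← lie_skew (D (D (D b))), ← lie_skew (D (D b))] at e₂
  rw [← smul_eq_zero_iff_right h3]
  linear_combination (norm := module) 3 • e + 3 • e₃ - e₁ - e₂

end IsLowering

end Lowering

/-- Two commuting derivations of a Lie algebra, to be thought of as raising a grading by one and
by two, and as generating the formal one-parameter group `exp (λ D + λ² S / 2)`. -/
structure DerivationPair (R L : Type*) [CommRing R] [LieRing L] [LieAlgebra R L] where
  D : LieDerivation R L L
  S : LieDerivation R L L
  S_D (v : L) : S (D v) = D (S v)

namespace DerivationPair

variable {R L : Type*} [CommRing R] [LieRing L] [LieAlgebra R L] (E : DerivationPair R L)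

/-- `2!` times the coefficient of `λ²` in `exp (λ D + λ² S / 2)`. -/
def expTwo (v : L) : L := E.D (E.D v) + E.S v

/-- `3!` times the coefficient of `λ³` in `exp (λ D + λ² S / 2)`. -/
def expThree (v : L) : L := E.D (E.D (E.D v)) + 3 • E.D (E.S v)

/-- `4!` times the coefficient of `λ⁴` in `exp (λ D + λ² S / 2)`. -/
def expFour (v : L) : L := E.D (E.D (E.D (E.D v))) + 6 • E.D (E.D (E.S v)) + 3 • E.S (E.S v)

/-- The vectors that all monomials of weight four in `D` and `S` annihilate, such as those of
degree `-1` in a Lie algebra graded by `-2, …, 2`. -/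
structure KillsWeightFour (a : L) : Prop where
  DDDD : E.D (E.D (E.D (E.D a))) = 0
  DDS : E.D (E.D (E.S a)) = 0
  SS : E.S (E.S a) = 0

/-- The vectors that all monomials of weight five or six in `D` and `S` annihilate, such as those
of degree `-2` in a Lie algebra graded by `-2, …, 2`. -/
structure KillsWeightFive (b : L) : Prop where
  DDDDD : E.D (E.D (E.D (E.D (E.D b)))) = 0
  DDDS : E.D (E.D (E.D (E.S b))) = 0
  DSS : E.D (E.S (E.S b)) = 0
  SSS : E.S (E.S (E.S b)) = 0

variable {E} {a b : L}

theorem expFour_lie (ha : E.KillsWeightFour a) (hb : E.KillsWeightFour b) :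
    E.expFour ⁅a, b⁆ = 4 • ⁅E.D a, E.expThree b⁆ + 6 • ⁅E.expTwo a, E.expTwo b⁆
      + 4 • ⁅E.expThree a, E.D b⁆ := by
  simp only [expTwo, expThree, expFour, LieDerivation.apply_lie_eq_add, map_add, add_lie, lie_add,
    nsmul_lie, lie_nsmul, ha.DDDD, ha.DDS, ha.SS, hb.DDDD, hb.DDS, hb.SS, lie_zero, zero_lie]
  module

-- The sums in `hD` and in the conclusion are a fifth of the Leibniz expansions of `D⁵ ⁅a, b⁆` and
-- of `5!` times the weight five part of `exp ⁅a, b⁆`; undivided, they say nothing in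
-- characteristic `5`.
theorem exp_lie_weight_five (ha : E.KillsWeightFour a) (hb : E.KillsWeightFive b)
    (hab : ⁅a, b⁆ = 0)
    (hD : ⁅E.D a, E.D (E.D (E.D (E.D b)))⁆ + 2 • ⁅E.D (E.D a), E.D (E.D (E.D b))⁆
      + 2 • ⁅E.D (E.D (E.D a)), E.D (E.D b)⁆ = 0) :
    ⁅E.D a, E.expFour b⁆ + 2 • ⁅E.expTwo a, E.expThree b⁆ + 2 • ⁅E.expThree a, E.expTwo b⁆
      = 0 := by
  have hDDDS := congrArg (fun v => E.D (E.D (E.D (E.S v)))) hab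
  have hDSS := congrArg (fun v => E.D (E.S (E.S v))) hab
  simp only [expTwo, expThree, expFour, LieDerivation.apply_lie_eq_add, map_add, map_zero,
    add_lie, lie_add, nsmul_lie, lie_nsmul, ha.DDS, ha.SS, hb.DDDS, hb.DSS, lie_zero,
    zero_lie] at hDDDS hDSS ⊢
  linear_combination (norm := module) hD + 2 • hDDDS + 3 • hDSS

theorem exp_lie_weight_six (ha : E.KillsWeightFive a) (hb : E.KillsWeightFive b)
    (hab : ⁅a, b⁆ = 0)
    (hD : 3 • ⁅E.D (E.D a), E.D (E.D (E.D (E.D b)))⁆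
      + 4 • ⁅E.D (E.D (E.D a)), E.D (E.D (E.D b))⁆
      + 3 • ⁅E.D (E.D (E.D (E.D a))), E.D (E.D b)⁆ = 0) :
    3 • ⁅E.expTwo a, E.expFour b⁆ + 4 • ⁅E.expThree a, E.expThree b⁆
      + 3 • ⁅E.expFour a, E.expTwo b⁆ = 0 := by
  have hDDDDS := congrArg (fun v => E.D (E.D (E.D (E.D (E.S v))))) hab
  have hDDSS := congrArg (fun v => E.D (E.D (E.S (E.S v)))) hab
  have hSSS := congrArg (fun v => E.S (E.S (E.S v))) hab
  simp only [expTwo, expThree, expFour, LieDerivation.apply_lie_eq_add, map_add, map_zero,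
    add_lie, lie_add, nsmul_lie, lie_nsmul, ha.DDDS, ha.DSS, ha.SSS, hb.DDDS, hb.DSS, hb.SSS,
    lie_zero, zero_lie] at hDDDDS hDDSS hSSS ⊢
  linear_combination (norm := module) hD + 3 • hDDDDS + 9 • hDDSS + 3 • hSSS

theorem weight_five_of_five_ne_zero [IsDomain R] [Module.IsTorsionFree R L] (h5 : (5 : R) ≠ 0)
    (ha : E.KillsWeightFour a) (hb : E.KillsWeightFive b) (hab : ⁅a, b⁆ = 0) :
    ⁅E.D a, E.D (E.D (E.D (E.D b)))⁆ + 2 • ⁅E.D (E.D a), E.D (E.D (E.D b))⁆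
      + 2 • ⁅E.D (E.D (E.D a)), E.D (E.D b)⁆ = 0 := by
  have h := congrArg (fun v => E.D (E.D (E.D (E.D (E.D v))))) hab
  simp only [LieDerivation.apply_lie_eq_add, map_add, map_zero, ha.DDDD, hb.DDDDD, lie_zero,
    zero_lie] at h
  rw [← smul_eq_zero_iff_right h5]
  linear_combination (norm := module) h

theorem weight_six_of_five_ne_zero [IsDomain R] [Module.IsTorsionFree R L] (h5 : (5 : R) ≠ 0)
    (ha : E.KillsWeightFive a) (hb : E.KillsWeightFive b) (hab : ⁅a, b⁆ = 0) :
    3 • ⁅E.D (E.D a), E.D (E.D (E.D (E.D b)))⁆ + 4 • ⁅E.D (E.D (E.D a)), E.D (E.D (E.D b))⁆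
      + 3 • ⁅E.D (E.D (E.D (E.D a))), E.D (E.D b)⁆ = 0 := by
  have h := congrArg (fun v => E.D (E.D (E.D (E.D (E.D (E.D v)))))) hab
  simp only [LieDerivation.apply_lie_eq_add, map_add, map_zero, ha.DDDDD, hb.DDDDD, lie_zero,
    zero_lie] at h
  rw [← smul_eq_zero_iff_right h5]
  linear_combination (norm := module) h

/-- The pair `(z, t)`, in degrees `(-1, -2)`, is a one-inverse of the pair `(x, s)`, in degrees
`(1, 2)`: the vector `exp (D + S / 2) (z + 2 t)` has components `ζ`, `-x / 2` and `s / 2` in degrees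
`0`, `1` and `2`, where `ζ` is the grading element, and `exp (D + S / 2) z` has none in
degree `2`. -/
structure IsOneInverse (E : DerivationPair R L) (x s ζ z t : L) : Prop where
  D_add_expTwo : E.D z + E.expTwo t = ζ
  expTwo_add_expThree : 3 • E.expTwo z + 2 • E.expThree t + 3 • x = 0
  expThree_eq_zero : E.expThree z = 0
  expFour_eq : E.expFour t = 6 • s

variable {x s ζ z t : L}

theorem IsOneInverse.of_expTwo (hDz : E.D z + E.expTwo t = ζ) (hDζ : E.D ζ = -x)
    (hDx : E.D x = 0) (hSζ : E.S ζ = 2 • s)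
    (hSz : 3 • E.S z = E.D (E.D (E.D t)) - 3 • E.D (E.S t)) (hDDSt : E.D (E.D (E.S t)) = 0) :
    E.IsOneInverse x s ζ z t := by
  have hD := congrArg E.D hDz
  have hDD := congrArg (fun v => E.D (E.D v)) hDz
  have hS := congrArg E.S hDz
  have hDSz := congrArg E.D hSz
  simp only [expTwo, map_add, map_neg, map_sub, map_nsmul, hDζ, hDx, hSζ, E.S_D, hDDSt, nsmul_zero,
    neg_zero] at hD hDD hS hDSz
  refine ⟨hDz, ?_, ?_, ?_⟩ <;> simp only [expTwo, expThree, expFour, hDDSt]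
  · linear_combination (norm := module) 3 • hD + hSz
  · linear_combination (norm := module) hDD + hDSz
  · linear_combination (norm := module) 3 • hS - hDSz

theorem IsOneInverse.expFour_lie (H : E.IsOneInverse x s ζ z t) (hD : ∀ v, E.D v = ⁅x, v⁆)
    (hS : ∀ v, E.S v = -⁅s, v⁆) (hz : E.KillsWeightFour z) (ha : E.KillsWeightFour a)
    (hζ : ⁅ζ, E.expThree a⁆ = 2 • E.expThree a)
    (hat : ⁅E.D a, E.expFour t⁆ + 2 • ⁅E.expTwo a, E.expThree t⁆
      + 2 • ⁅E.expThree a, E.expTwo t⁆ = 0) :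
    E.expFour ⁅z, a⁆ = 2 • E.expThree a := by
  have hza := DerivationPair.expFour_lie hz ha
  have hDz : ⁅E.D z, E.expThree a⁆ = 2 • E.expThree a - ⁅E.expTwo t, E.expThree a⁆ := by
    rw [eq_sub_of_add_eq H.D_add_expTwo, sub_lie, hζ]
  have hEz : 3 • ⁅E.expTwo z, E.expTwo a⁆ + 2 • ⁅E.expThree t, E.expTwo a⁆
      + 3 • E.D (E.expTwo a) = 0 := by
    rw [hD, ← nsmul_lie, ← nsmul_lie, ← nsmul_lie, ← add_lie, ← add_lie,
      H.expTwo_add_expThree, zero_lie]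
  have hSDa : ⁅E.D a, s⁆ = E.D (E.S a) := by rw [← lie_skew, ← hS, E.S_D]
  have hexp : E.expThree a = E.D (E.expTwo a) + 2 • E.D (E.S a) := by
    rw [expThree, expTwo, map_add]
    module
  rw [H.expFour_eq, lie_nsmul, hSDa, ← lie_skew (E.expTwo a), ← lie_skew (E.expThree a)] at hat
  rw [H.expThree_eq_zero, zero_lie] at hza
  linear_combination (norm := module) hza + 4 • hDz + 2 • hEz + 2 • hat + 6 • hexp

theorem lie_expTwo_sub {α β : L} (ha : E.KillsWeightFour a) (hb : E.KillsWeightFour b)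
    (hα : E.expFour α = 2 • E.expThree a) (hβ : E.expFour β = 2 • E.expThree b)
    (haβ : ⁅E.D a, E.expFour β⁆ + 2 • ⁅E.expTwo a, E.expThree β⁆
      + 2 • ⁅E.expThree a, E.expTwo β⁆ = 0)
    (hbα : ⁅E.D b, E.expFour α⁆ + 2 • ⁅E.expTwo b, E.expThree α⁆
      + 2 • ⁅E.expThree b, E.expTwo α⁆ = 0)
    (hαβ : 3 • ⁅E.expTwo α, E.expFour β⁆ + 4 • ⁅E.expThree α, E.expThree β⁆
      + 3 • ⁅E.expFour α, E.expTwo β⁆ = 0) :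
    2 • ⁅3 • E.expTwo a - 2 • E.expThree α, 3 • E.expTwo b - 2 • E.expThree β⁆
      = 3 • E.expFour ⁅a, b⁆ := by
  have hab := expFour_lie ha hb
  rw [hα] at hbα hαβ
  rw [hβ] at haβ hαβ
  rw [← lie_skew (E.D b), ← lie_skew (E.expTwo b), ← lie_skew (E.expThree b)] at hbα
  simp only [lie_sub, sub_lie, lie_nsmul, nsmul_lie] at hbα haβ hαβ ⊢
  linear_combination (norm := module) 2 • hαβ + 6 • hbα - 6 • haβ - 3 • hab

end DerivationPair

namespace IsStructurable

/-! ### Associators in a structurable algebra -/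

section Algebra

variable {k : Type*} [Field k] {A : Type*} [NonAssocRing A] [Module k A] {bar : A → A}

theorem bar_add (H : IsStructurable k A bar) (x y : A) : bar (x + y) = bar x + bar y := H.1 x y

theorem bar_smul (H : IsStructurable k A bar) (c : k) (x : A) : bar (c • x) = c • bar x :=
  H.2.1 c x

theorem bar_mul (H : IsStructurable k A bar) (x y : A) : bar (x * y) = bar y * bar x :=
  H.2.2.1 x y

theorem bar_bar (H : IsStructurable k A bar) (x : A) : bar (bar x) = x := H.2.2.2.1 x

theorem bar_zero (H : IsStructurable k A bar) : bar 0 = 0 := by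
  simpa using H.bar_smul (0 : k) 0

theorem bar_neg (H : IsStructurable k A bar) (x : A) : bar (-x) = -bar x := by
  simpa using H.bar_smul (-1 : k) x

theorem bar_sub (H : IsStructurable k A bar) (x y : A) : bar (x - y) = bar x - bar y := by
  rw [sub_eq_add_neg, H.bar_add, H.bar_neg, ← sub_eq_add_neg]

theorem bar_one (H : IsStructurable k A bar) : bar 1 = 1 := by
  have h := H.bar_mul 1 (bar 1)
  rwa [one_mul, H.bar_bar, one_mul, eq_comm] at h

theorem bar_psi (H : IsStructurable k A bar) (x y : A) :
    bar (strPsi bar x y) = -strPsi bar x y := by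
  simp only [strPsi, H.bar_sub, H.bar_mul, H.bar_bar, neg_sub]

theorem trip_trip (H : IsStructurable k A bar) (x y z w a : A) :
    strTrip bar x y (strTrip bar z w a) = strTrip bar (strTrip bar x y z) w a
      - strTrip bar z (strTrip bar y x w) a + strTrip bar z w (strTrip bar x y a) :=
  sub_eq_iff_eq_add.1 (H.2.2.2.2 x y z w a)

theorem bar_associator (H : IsStructurable k A bar) (x y z : A) :
    bar (associator x y z) = -associator (bar z) (bar y) (bar x) := by
  simp only [associator_apply, H.bar_sub, H.bar_mul, neg_sub]

-- `V_{y,1} = V_{1,ȳ}`, so `[V_{x,1}, V_{y,1}]` can be expanded in two ways.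
theorem associator_add_associator_swap_right [NeZero (3 : k)] (H : IsStructurable k A bar)
    (x y z : A) :
    associator z x y + associator z y x
      = associator z (bar x) (bar y) + associator z (bar y) (bar x) := by
  have e₁ := H.trip_trip x 1 y 1 z
  have e₂ := H.trip_trip x 1 1 (bar y) z
  have e₃ := H.trip_trip (bar x) 1 y 1 z
  have e₄ := H.trip_trip (bar x) 1 1 (bar y) z
  rw [← sub_eq_zero, ← smul_eq_zero_iff_right (three_ne_zero (α := k))]
  simp only [strTrip, associator_apply, H.bar_add, H.bar_sub, H.bar_mul, H.bar_bar, H.bar_one,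
    mul_one, one_mul, mul_add, add_mul, mul_sub, sub_mul] at e₁ e₂ e₃ e₄ ⊢
  linear_combination (norm := module) (2 : k) • (e₁ - e₂) + e₃ - e₄

theorem associator_add_associator_swap_left [NeZero (3 : k)] (H : IsStructurable k A bar)
    (x y z : A) :
    associator x y z + associator y x z
      = associator (bar x) (bar y) z + associator (bar y) (bar x) z := by
  have h := congrArg bar (H.associator_add_associator_swap_right (bar y) (bar x) (bar z))
  simpa only [H.bar_add, H.bar_associator, H.bar_bar, ← neg_add, neg_inj] using h

section Skew

variable {s : A}

theorem associator_skew_bar (H : IsStructurable k A bar) (hs : bar s = -s) (x y : A) :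
    associator s x y - associator x y s
      = associator s (bar y) (bar x) - associator (bar y) (bar x) s := by
  have e := H.trip_trip y (bar x) s 1 1
  simp only [strTrip, associator_apply, H.bar_add, H.bar_sub, H.bar_mul, H.bar_bar,
    H.bar_one, hs, mul_one, one_mul, mul_add, add_mul, mul_sub, sub_mul, mul_neg, neg_mul] at e ⊢
  linear_combination (norm := module) e

theorem associator_skew_derivation (H : IsStructurable k A bar) (hs : bar s = -s) (x y : A) :
    associator s x y + associator s y x - associator s y (bar x)
      = (2 : k) • associator x y s + (2 : k) • associator y x s + associator y (bar x) s
        + associator x s y + associator y s x + (2 : k) • associator y s (bar x) := by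
  have e := H.trip_trip s 1 x 1 y
  simp only [strTrip, associator_apply, H.bar_add, H.bar_sub, H.bar_neg, H.bar_mul,
    H.bar_one, hs, mul_one, one_mul, mul_add, add_mul, mul_sub, sub_mul, mul_neg, neg_mul] at e ⊢
  linear_combination (norm := module) -e

theorem associator_skew_hermitian [NeZero (2 : k)] [NeZero (3 : k)] (H : IsStructurable k A bar)
    (hs : bar s = -s) {h : A} (hh : bar h = h) (x : A) :
    associator s h x = associator h x s := by
  have e₁ := H.associator_skew_derivation hs h x
  have e₂ := H.associator_add_associator_swap_right h s x
  have e₃ := H.associator_add_associator_swap_left h s x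
  have h4 : (2 * 2 : k) ≠ 0 := mul_ne_zero two_ne_zero two_ne_zero
  rw [← sub_eq_zero, ← smul_eq_zero_iff_right h4]
  simp only [hh, hs, associator_apply, mul_neg, neg_mul] at e₁ e₂ e₃ ⊢
  linear_combination (norm := module) (2 : k) • e₁ + e₃ + (3 : k) • e₂

-- The associators of the even permutations of `s`, `p`, `q` form an arithmetic progression
-- in cyclic order, hence they agree.
theorem associator_skew_skew [NeZero (2 : k)] [NeZero (3 : k)] (H : IsStructurable k A bar)
    (hs : bar s = -s) {p q : A} (hp : bar p = -p) (hq : bar q = -q) :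
    associator s p q = associator p q s := by
  have e₁ := H.associator_skew_derivation hs p q
  have e₂ := H.associator_skew_derivation hp q s
  have e₃ := H.associator_skew_bar hs p q
  have h6 : (2 * 3 : k) ≠ 0 := mul_ne_zero two_ne_zero three_ne_zero
  rw [← sub_eq_zero, ← smul_eq_zero_iff_right h6]
  simp only [hp, hq, associator_apply, mul_neg, neg_mul] at e₁ e₂ e₃ ⊢
  linear_combination (norm := module) (2 : k) • e₁ + e₂ + (3 : k) • e₃

theorem associator_skew_left_eq_right [NeZero (2 : k)] [NeZero (3 : k)]
    (H : IsStructurable k A bar) (hs : bar s = -s) (x y : A) :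
    associator s x y = associator x y s := by
  have e₁ := H.associator_skew_hermitian hs (h := x + bar x)
    (by rw [H.bar_add, H.bar_bar, add_comm]) y
  have e₂ := H.associator_skew_hermitian hs (h := y + bar y)
    (by rw [H.bar_add, H.bar_bar, add_comm]) (x - bar x)
  have e₃ := H.associator_skew_skew hs (p := x - bar x) (q := y - bar y)
    (by rw [H.bar_sub, H.bar_bar, neg_sub]) (by rw [H.bar_sub, H.bar_bar, neg_sub])
  have e₄ := H.associator_skew_bar hs (x - bar x) (y + bar y)
  have h4 : (2 * 2 : k) ≠ 0 := mul_ne_zero two_ne_zero two_ne_zero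
  rw [← sub_eq_zero, ← smul_eq_zero_iff_right h4]
  simp only [associator_apply, H.bar_add, H.bar_sub, H.bar_bar, mul_add, add_mul, mul_sub,
    sub_mul] at e₁ e₂ e₃ e₄ ⊢
  linear_combination (norm := module) (2 : k) • e₁ - e₂ + e₃ + e₄

theorem trip_skew_add_mul_trip_one [NeZero (2 : k)] [NeZero (3 : k)]
    (H : IsStructurable k A bar) (hs : bar s = -s) (x y : A) :
    strTrip bar x y s + s * strTrip bar y x 1 = -strPsi bar x (s * y) := by
  have e₁ := H.associator_add_associator_swap_left x (bar y) s
  have e₂ := H.associator_skew_left_eq_right hs (bar y) x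
  have e₃ := H.associator_skew_left_eq_right hs (bar x) y
  have e₄ := H.associator_skew_left_eq_right hs y (bar x)
  simp only [strTrip, strPsi, associator_apply, H.bar_mul, H.bar_bar, hs, one_mul,
    mul_one, mul_neg, mul_add, mul_sub] at e₁ e₂ e₃ e₄ ⊢
  linear_combination (norm := module) e₁ + e₂ - e₃ - e₄

end Skew

end Algebra

/-! ### The Kantor Lie algebra -/

section DegreeZero

attribute [local instance] LieRing.ofAssociativeRing

variable {k : Type*} [Field k] {A : Type*} [NonAssocRing A] [Module k A] {bar : A → A}

/-- The space `S` of skew elements. -/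
def skew (H : IsStructurable k A bar) : Submodule k A where
  carrier := {s | bar s = -s}
  add_mem' {s t} (hs : bar s = -s) (ht : bar t = -t) :=
    show bar (s + t) = -(s + t) by rw [H.bar_add, hs, ht, neg_add]
  zero_mem' := show bar 0 = -0 by rw [H.bar_zero, neg_zero]
  smul_mem' c s (hs : bar s = -s) := show bar (c • s) = -(c • s) by rw [H.bar_smul, hs, smul_neg]

theorem bar_skew (H : IsStructurable k A bar) (s : H.skew) : bar (s : A) = -s := s.2

variable [SMulCommClass k A A] [IsScalarTower k A A]

/-- The map `ψ`, as a bilinear map into the skew elements. -/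
def psi (H : IsStructurable k A bar) : A →ₗ[k] A →ₗ[k] H.skew :=
  LinearMap.mk₂ k (fun x y => ⟨strPsi bar x y, H.bar_psi x y⟩)
    (by intros; ext; simp only [strPsi, Submodule.coe_add, H.bar_add, add_mul, mul_add]; abel)
    (by intros; ext; simp [strPsi, H.bar_smul, smul_sub, smul_mul_assoc, mul_smul_comm])
    (by intros; ext; simp only [strPsi, Submodule.coe_add, H.bar_add, add_mul, mul_add]; abel)
    (by intros; ext; simp [strPsi, H.bar_smul, smul_sub, smul_mul_assoc, mul_smul_comm])

/-- The triple product as a trilinear map, `triple x y` being the operator `V_{x,y}`. -/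
def triple (H : IsStructurable k A bar) : A →ₗ[k] A →ₗ[k] Module.End k A :=
  LinearMap.mk₂ k (fun x y =>
      { toFun := strTrip bar x y
        map_add' := by intros; simp only [strTrip, add_mul, mul_add]; abel
        map_smul' := by intros; simp [strTrip, smul_add, smul_sub, smul_mul_assoc, mul_smul_comm] })
    (by intros; ext; simp only [strTrip, LinearMap.coe_mk, AddHom.coe_mk, LinearMap.add_apply,
          H.bar_add, add_mul, mul_add]; abel)
    (by intros; ext; simp [strTrip, H.bar_smul, smul_add, smul_sub, smul_mul_assoc, mul_smul_comm])
    (by intros; ext; simp only [strTrip, LinearMap.coe_mk, AddHom.coe_mk, LinearMap.add_apply,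
          H.bar_add, add_mul, mul_add]; abel)
    (by intros; ext; simp [strTrip, H.bar_smul, smul_add, smul_sub, smul_mul_assoc, mul_smul_comm])

variable (H : IsStructurable k A bar)

theorem coe_psi (x y : A) : (H.psi x y : A) = strPsi bar x y := rfl

theorem triple_apply (x y z : A) : H.triple x y z = strTrip bar x y z := rfl

theorem psi_self (x : A) : H.psi x x = 0 := Subtype.ext (sub_self _)

theorem neg_psi_swap (x y : A) : -H.psi y x = H.psi x y := Subtype.ext (neg_sub _ _)

theorem psi_skew_one (s : H.skew) : H.psi s 1 = (2 : k) • s := by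
  ext
  rw [coe_psi, strPsi, H.bar_one, H.bar_skew, mul_one, one_mul, Submodule.coe_smul]
  module

theorem psi_mul (x y z : A) : (H.psi x y : A) * z = H.triple x z y - H.triple y z x := by
  simp only [coe_psi, triple_apply, strTrip, strPsi, sub_mul]
  abel

theorem triple_triple (x y z w a : A) :
    H.triple x y (H.triple z w a) = H.triple (H.triple x y z) w a
      - H.triple z (H.triple y x w) a + H.triple z w (H.triple x y a) :=
  H.trip_trip x y z w a

/-- The degree zero part of the Kantor Lie algebra: the pairs `(T⁺, T⁻)` of endomorphisms of
`A` that act as a derivation on the triple products `A₁ × A₋₁ × A₁ → A₁` and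
`A₋₁ × A₁ × A₋₁ → A₋₁`. -/
def degZero : LieSubalgebra k (Module.End k A × Module.End k A) where
  carrier := {T |
    (∀ x y z, T.1 (H.triple x y z)
      = H.triple (T.1 x) y z + H.triple x (T.2 y) z + H.triple x y (T.1 z)) ∧
    (∀ x y z, T.2 (H.triple x y z)
      = H.triple (T.2 x) y z + H.triple x (T.1 y) z + H.triple x y (T.2 z))}
  add_mem' := by
    rintro T U ⟨hT₁, hT₂⟩ ⟨hU₁, hU₂⟩
    constructor <;> intros <;>
      simp only [Prod.fst_add, Prod.snd_add, LinearMap.add_apply, map_add, *] <;> abel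
  zero_mem' := by constructor <;> intros <;> simp
  smul_mem' := by
    rintro c T ⟨hT₁, hT₂⟩
    constructor <;> intros <;>
      simp only [Prod.smul_fst, Prod.smul_snd, LinearMap.smul_apply, map_smul, smul_add, *]
  lie_mem' := by
    rintro T U ⟨hT₁, hT₂⟩ ⟨hU₁, hU₂⟩
    constructor <;> intros <;>
      simp only [LieRing.of_associative_ring_bracket, Prod.fst_sub, Prod.snd_sub, Prod.fst_mul,
        Prod.snd_mul, LinearMap.sub_apply, Module.End.mul_apply, map_sub, map_add, *] <;> abel

/-- The action `T⁺` of the degree zero part on `A` in degree `1`. -/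
def pos : H.degZero →ₗ[k] Module.End k A :=
  LinearMap.fst k _ _ ∘ₗ H.degZero.toSubmodule.subtype

/-- The action `T⁻` of the degree zero part on `A` in degree `-1`. -/
def neg : H.degZero →ₗ[k] Module.End k A :=
  LinearMap.snd k _ _ ∘ₗ H.degZero.toSubmodule.subtype

/-- The involution `(T⁺, T⁻) ↦ (T⁻, T⁺)`, which reverses the grading. -/
def swap : H.degZero →ₗ[k] H.degZero where
  toFun T := ⟨T.1.swap, T.2.2, T.2.1⟩
  map_add' _ _ := rfl
  map_smul' _ _ := rfl

/-- The action of the degree zero part on `S` in degree `2`. -/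
def posSkew : H.degZero →ₗ[k] Module.End k H.skew :=
  LinearMap.mk₂ k (fun T s => (2 : k)⁻¹ • (H.psi (H.pos T s) 1 + H.psi s (H.pos T 1)))
    (by intros; simp only [map_add, LinearMap.add_apply]; module)
    (by intros; simp only [map_smul, LinearMap.smul_apply]; module)
    (by intros; simp only [Submodule.coe_add, map_add, LinearMap.add_apply]; module)
    (by intros; simp only [Submodule.coe_smul, map_smul, LinearMap.smul_apply]; module)

/-- The action of the degree zero part on `S` in degree `-2`. -/
def negSkew : H.degZero →ₗ[k] Module.End k H.skew := H.posSkew ∘ₗ H.swap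

variable (T U : H.degZero)

theorem swap_swap : H.swap (H.swap T) = T := rfl

theorem pos_swap : H.pos (H.swap T) = H.neg T := rfl

theorem swap_lie : H.swap ⁅T, U⁆ = ⁅H.swap T, H.swap U⁆ := rfl

theorem posSkew_swap : H.posSkew (H.swap T) = H.negSkew T := rfl

theorem pos_triple (x y z : A) :
    H.pos T (H.triple x y z)
      = H.triple (H.pos T x) y z + H.triple x (H.neg T y) z + H.triple x y (H.pos T z) :=
  T.2.1 x y z

theorem pos_lie (x : A) : H.pos ⁅T, U⁆ x = H.pos T (H.pos U x) - H.pos U (H.pos T x) := rfl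

theorem pos_psi_mul (x y z : A) :
    H.pos T (H.psi x y * z)
      = (H.psi (H.pos T x) y + H.psi x (H.pos T y) : H.skew) * z + H.psi x y * H.neg T z := by
  simp only [Submodule.coe_add, add_mul, psi_mul, map_sub, pos_triple]
  abel

/-- The grading element, which acts as multiplication by `i` in degree `i`. -/
def grading : H.degZero := ⟨(1, -1), by constructor <;> intros <;> simp⟩

theorem pos_grading (x : A) : H.pos H.grading x = x := rfl

theorem neg_grading (x : A) : H.neg H.grading x = -x := rfl

section TwoNeZero

variable [NeZero (2 : k)]

theorem pos_skew_mul (s : H.skew) (z : A) :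
    H.pos T (s * z) = H.posSkew T s * z + s * H.neg T z := by
  have e := H.pos_psi_mul T s 1 z
  simp only [psi_skew_one, Submodule.coe_smul, smul_mul_assoc, map_smul] at e
  have e' : H.posSkew T s = (2 : k)⁻¹ • (H.psi (H.pos T s) 1 + H.psi s (H.pos T 1)) := rfl
  rw [e', ← eq_inv_smul_iff₀ two_ne_zero] at *
  rw [e, smul_add, inv_smul_smul₀ two_ne_zero, Submodule.coe_smul, smul_mul_assoc]

theorem posSkew_psi (x y : A) :
    H.posSkew T (H.psi x y) = H.psi (H.pos T x) y + H.psi x (H.pos T y) := by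
  have e := H.pos_psi_mul T x y 1
  rw [pos_skew_mul, add_left_inj, mul_one, mul_one] at e
  exact Subtype.ext e

theorem neg_skew_mul (s : H.skew) (z : A) :
    H.neg T (s * z) = H.negSkew T s * z + s * H.pos T z :=
  H.pos_skew_mul (H.swap T) s z

theorem posSkew_lie (s : H.skew) :
    H.posSkew ⁅T, U⁆ s = H.posSkew T (H.posSkew U s) - H.posSkew U (H.posSkew T s) := by
  have e := H.posSkew_psi ⁅T, U⁆ s 1
  have e' := congrArg₂ (· - ·) (congrArg (H.posSkew T) (H.posSkew_psi U s 1))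
    (congrArg (H.posSkew U) (H.posSkew_psi T s 1))
  simp only [psi_skew_one, map_smul, map_add, posSkew_psi, pos_lie, map_sub, LinearMap.sub_apply]
    at e e'
  refine smul_right_injective _ (two_ne_zero (α := k)) ?_
  linear_combination (norm := module) e - e'

theorem posSkew_grading (s : H.skew) : H.posSkew H.grading s = 2 • s := by
  have e : H.posSkew H.grading s = (2 : k)⁻¹ • (H.psi s 1 + H.psi s 1) := rfl
  rw [e, ← two_smul k, inv_smul_smul₀ two_ne_zero, psi_skew_one]
  module

theorem negSkew_grading (s : H.skew) : H.negSkew H.grading s = -(2 • s) := by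
  have e : H.swap H.grading = -H.grading := Subtype.ext (Prod.ext rfl (neg_neg _).symm)
  rw [← posSkew_swap, e, map_neg, LinearMap.neg_apply, posSkew_grading]

end TwoNeZero

theorem eq_of_pos_eq [NeZero (3 : k)] {T U : H.degZero} (h : ∀ x, H.pos T x = H.pos U x) :
    T = U := by
  have hneg (y : A) : H.neg T y = H.neg U y := by
    have eT := H.pos_triple T 1 y 1
    have eU := H.pos_triple U 1 y 1
    rw [h, h, eU] at eT
    have e := congrArg bar eT
    rw [← sub_eq_zero, ← smul_eq_zero_iff_right (three_ne_zero (α := k))]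
    simp only [triple_apply, strTrip, one_mul, mul_one, H.bar_one, H.bar_add, H.bar_sub,
      H.bar_bar] at eT e
    linear_combination (norm := module) -eT - (2 : k) • e
  exact Subtype.ext (Prod.ext (LinearMap.ext h) (LinearMap.ext hneg))

section ThreeNeZero

variable [NeZero (3 : k)]

/-- The element `V(x, y) = (V_{x,y}, -V_{y,x})` of the degree zero part. -/
def opV : A →ₗ[k] A →ₗ[k] H.degZero :=
  LinearMap.mk₂ k (fun x y => ⟨(H.triple x y, -H.triple y x), by
      constructor <;> intro a b c <;> simp only [LinearMap.neg_apply, map_neg]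
      · rw [H.triple_triple x y a b c, sub_eq_add_neg]
      · rw [H.triple_triple y x a b c]
        abel⟩)
    (fun x x' y => H.eq_of_pos_eq (LinearMap.congr_fun (H.triple.map_add₂ x x' y)))
    (fun c x y => H.eq_of_pos_eq (LinearMap.congr_fun (H.triple.map_smul₂ c x y)))
    (fun x y y' => H.eq_of_pos_eq (LinearMap.congr_fun (map_add (H.triple x) y y')))
    (fun c x y => H.eq_of_pos_eq (LinearMap.congr_fun (map_smul (H.triple x) c y)))

theorem pos_opV (x y z : A) : H.pos (H.opV x y) z = H.triple x y z := rfl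

theorem neg_opV (x y z : A) : H.neg (H.opV x y) z = -H.triple y x z := rfl

theorem opV_eq_grading {x y : A} (h : ∀ z, strTrip bar x y z = z) : H.opV x y = H.grading :=
  H.eq_of_pos_eq h

theorem swap_opV (x y : A) : H.swap (H.opV x y) = -H.opV y x :=
  Subtype.ext (Prod.ext rfl (neg_neg _).symm)

theorem lie_opV (x y : A) :
    ⁅T, H.opV x y⁆ = H.opV (H.pos T x) y + H.opV x (H.neg T y) := by
  refine H.eq_of_pos_eq fun z => ?_
  simp only [pos_lie, pos_opV, pos_triple, map_add, LinearMap.add_apply]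
  abel

/-- The element `W(s, t) = (L_s L_t, -L_t L_s)` of the degree zero part, which is a combination
of elements `V(x, y)`. -/
def opW : H.skew →ₗ[k] H.skew →ₗ[k] H.degZero :=
  LinearMap.mk₂ k (fun s t => (2 : k)⁻¹ • (H.opV (s * t) 1 - H.opV s t))
    (by intros; simp only [Submodule.coe_add, add_mul, map_add, LinearMap.add_apply]; module)
    (by intros; simp only [Submodule.coe_smul, smul_mul_assoc, map_smul, LinearMap.smul_apply]
        module)
    (by intros; simp only [Submodule.coe_add, mul_add, map_add, LinearMap.add_apply]; module)
    (by intros; simp only [Submodule.coe_smul, mul_smul_comm, map_smul, LinearMap.smul_apply]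
        module)

theorem opW_apply (s t : H.skew) :
    H.opW s t = (2 : k)⁻¹ • (H.opV (s * t) 1 - H.opV s t) := rfl

theorem swap_opW (s t : H.skew) : H.swap (H.opW s t) = -H.opW t s := by
  have e : H.opV 1 (s * t) = H.opV (t * s) 1 := by
    refine H.eq_of_pos_eq fun z => ?_
    simp only [pos_opV, triple_apply, strTrip, H.bar_mul, H.bar_skew, H.bar_one, neg_mul_neg,
      one_mul, mul_one]
  rw [opW_apply, opW_apply, map_smul, map_sub, swap_opV, swap_opV, e]
  module

variable [NeZero (2 : k)]

theorem posSkew_opV (x y : A) (s : H.skew) :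
    H.posSkew (H.opV x y) s = -H.psi x (s * y) := by
  ext
  have e := H.pos_skew_mul (H.opV x y) s 1
  rw [mul_one, mul_one, pos_opV, neg_opV, mul_neg, ← sub_eq_add_neg, eq_sub_iff_add_eq] at e
  rw [← e, Submodule.coe_neg]
  exact H.trip_skew_add_mul_trip_one (H.bar_skew s) x y

theorem skew_mul_psi_mul (s : H.skew) (y y' z : A) :
    (s : A) * (H.psi y y' * z) = H.triple (s * y) y' z - H.triple (s * y') y z := by
  have e := H.pos_skew_mul (H.opV z y) s y'
  have e' := H.pos_skew_mul (H.opV z y') s y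
  simp only [pos_opV, neg_opV, posSkew_opV, Submodule.coe_neg, neg_mul, psi_mul, mul_neg] at e e'
  rw [psi_mul, mul_sub]
  linear_combination (norm := module) e - e'

theorem pos_opW (s t : H.skew) (z : A) : H.pos (H.opW s t) z = s * (t * z) := by
  have e := H.skew_mul_psi_mul s t 1 z
  rw [psi_skew_one, Submodule.coe_smul, smul_mul_assoc, mul_smul_comm, mul_one,
    ← eq_inv_smul_iff₀ two_ne_zero] at e
  rw [e, opW_apply, map_smul, map_sub]
  rfl

theorem opW_psi_right (s : H.skew) (y y' : A) :
    H.opW s (H.psi y y') = H.opV (s * y) y' - H.opV (s * y') y := by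
  refine H.eq_of_pos_eq fun z => ?_
  rw [pos_opW, skew_mul_psi_mul, map_sub, LinearMap.sub_apply, pos_opV, pos_opV]

theorem neg_opW (s t : H.skew) (z : A) : H.neg (H.opW s t) z = -(t * (s * z)) := by
  rw [← pos_swap, swap_opW, map_neg, LinearMap.neg_apply, pos_opW]

theorem opW_psi_left (t : H.skew) (x x' : A) :
    H.opW (H.psi x x') t = H.opV x' (t * x) - H.opV x (t * x') := by
  rw [← H.swap_swap (H.opW (H.psi x x') t), swap_opW, opW_psi_right, map_neg, map_sub, swap_opV,
    swap_opV]
  abel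

theorem lie_opW (s t : H.skew) :
    ⁅T, H.opW s t⁆ = H.opW (H.posSkew T s) t + H.opW s (H.negSkew T t) := by
  refine H.eq_of_pos_eq fun z => ?_
  simp only [pos_lie, pos_opW, pos_skew_mul, neg_skew_mul, map_add, LinearMap.add_apply, mul_add]
  abel

theorem posSkew_opW (s t s' : H.skew) :
    H.posSkew (H.opW s t) s' = (2 : k)⁻¹ • (H.psi s' (s * t) + H.psi s (s' * t)) := by
  rw [opW_apply, map_smul, map_sub, LinearMap.smul_apply, LinearMap.sub_apply, posSkew_opV,
    posSkew_opV, mul_one, neg_psi_swap, sub_neg_eq_add]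

theorem posSkew_opW_comm (s t s' : H.skew) :
    H.posSkew (H.opW s t) s' = H.posSkew (H.opW s' t) s := by
  rw [posSkew_opW, posSkew_opW, add_comm]

theorem coe_posSkew_opW_self (s t : H.skew) :
    (H.posSkew (H.opW s t) s : A) = (2 : k) • (s * (t * s) : A) := by
  have e := H.pos_skew_mul (H.opW s t) s 1
  rw [pos_opW, neg_opW, mul_neg] at e
  simp only [mul_one] at e
  linear_combination (norm := module) -e

end ThreeNeZero

/-- The Kantor Lie algebra `S₋₂ ⊕ A₋₁ ⊕ L₀ ⊕ A₁ ⊕ S₂` of a structurable algebra, where `L₀` is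
the algebra `degZero`. -/
@[ext]
structure Kantor (H : IsStructurable k A bar) where
  negTwo : H.skew
  negOne : A
  zero : H.degZero
  one : A
  two : H.skew

namespace Kantor

variable {H}

private def equivProd : H.Kantor ≃ H.skew × A × H.degZero × A × H.skew where
  toFun X := ⟨X.negTwo, X.negOne, X.zero, X.one, X.two⟩
  invFun X := ⟨X.1, X.2.1, X.2.2.1, X.2.2.2.1, X.2.2.2.2⟩

instance : AddCommGroup H.Kantor := equivProd.addCommGroup

instance : Module k H.Kantor := equivProd.module k

variable (X Y Z : H.Kantor)

theorem add_def : X + Y = ⟨X.negTwo + Y.negTwo, X.negOne + Y.negOne, X.zero + Y.zero,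
    X.one + Y.one, X.two + Y.two⟩ := rfl

theorem smul_def (c : k) :
    c • X = ⟨c • X.negTwo, c • X.negOne, c • X.zero, c • X.one, c • X.two⟩ := rfl

theorem zero_def : (0 : H.Kantor) = ⟨0, 0, 0, 0, 0⟩ := rfl

/-- The inclusion of `S` in degree `-2`. -/
def ofNegTwo : H.skew →ₗ[k] H.Kantor where
  toFun s := ⟨s, 0, 0, 0, 0⟩
  map_add' _ _ := by simp only [add_def, add_zero]
  map_smul' _ _ := by simp only [smul_def, smul_zero, RingHom.id_apply]

/-- The inclusion of `A` in degree `-1`. -/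
def ofNegOne : A →ₗ[k] H.Kantor where
  toFun x := ⟨0, x, 0, 0, 0⟩
  map_add' _ _ := by simp only [add_def, add_zero]
  map_smul' _ _ := by simp only [smul_def, smul_zero, RingHom.id_apply]

/-- The inclusion of `L₀` in degree `0`. -/
def ofZero : H.degZero →ₗ[k] H.Kantor where
  toFun T := ⟨0, 0, T, 0, 0⟩
  map_add' _ _ := by simp only [add_def, add_zero]
  map_smul' _ _ := by simp only [smul_def, smul_zero, RingHom.id_apply]

/-- The inclusion of `A` in degree `1`. -/
def ofOne : A →ₗ[k] H.Kantor where
  toFun x := ⟨0, 0, 0, x, 0⟩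
  map_add' _ _ := by simp only [add_def, add_zero]
  map_smul' _ _ := by simp only [smul_def, smul_zero, RingHom.id_apply]

/-- The inclusion of `S` in degree `2`. -/
def ofTwo : H.skew →ₗ[k] H.Kantor where
  toFun s := ⟨0, 0, 0, 0, s⟩
  map_add' _ _ := by simp only [add_def, add_zero]
  map_smul' _ _ := by simp only [smul_def, smul_zero, RingHom.id_apply]

theorem ofTwo_injective : Function.Injective (ofTwo : H.skew → H.Kantor) :=
  fun _ _ h => congrArg Kantor.two h

variable [NeZero (3 : k)]

instance : Bracket H.Kantor H.Kantor where
  bracket X Y :=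
    { negTwo := H.negSkew X.zero Y.negTwo - H.negSkew Y.zero X.negTwo + H.psi X.negOne Y.negOne
      negOne := H.neg X.zero Y.negOne - H.neg Y.zero X.negOne
        + (X.negTwo * Y.one - Y.negTwo * X.one)
      zero := ⁅X.zero, Y.zero⁆ + (H.opV X.one Y.negOne - H.opV Y.one X.negOne)
        + (H.opW X.two Y.negTwo - H.opW Y.two X.negTwo)
      one := H.pos X.zero Y.one - H.pos Y.zero X.one + (X.two * Y.negOne - Y.two * X.negOne)
      two := H.posSkew X.zero Y.two - H.posSkew Y.zero X.two + H.psi X.one Y.one }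

theorem lie_def : ⁅X, Y⁆ =
    { negTwo := H.negSkew X.zero Y.negTwo - H.negSkew Y.zero X.negTwo + H.psi X.negOne Y.negOne
      negOne := H.neg X.zero Y.negOne - H.neg Y.zero X.negOne
        + (X.negTwo * Y.one - Y.negTwo * X.one)
      zero := ⁅X.zero, Y.zero⁆ + (H.opV X.one Y.negOne - H.opV Y.one X.negOne)
        + (H.opW X.two Y.negTwo - H.opW Y.two X.negTwo)
      one := H.pos X.zero Y.one - H.pos Y.zero X.one + (X.two * Y.negOne - Y.two * X.negOne)
      two := H.posSkew X.zero Y.two - H.posSkew Y.zero X.two + H.psi X.one Y.one } := rfl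

theorem ofNegOne_lie (x : A) : ⁅(ofNegOne x : H.Kantor), X⁆ =
    ⟨H.psi x X.negOne, -H.neg X.zero x, -H.opV X.one x, -(X.two * x), 0⟩ := by
  ext1 <;> simp [lie_def, ofNegOne]

theorem ofZero_lie (T : H.degZero) : ⁅ofZero T, X⁆ =
    ⟨H.negSkew T X.negTwo, H.neg T X.negOne, ⁅T, X.zero⁆, H.pos T X.one, H.posSkew T X.two⟩ := by
  ext1 <;> simp [lie_def, ofZero]

theorem ofOne_lie (x : A) : ⁅(ofOne x : H.Kantor), X⁆ =
    ⟨0, -(X.negTwo * x), H.opV x X.negOne, -H.pos X.zero x, H.psi x X.one⟩ := by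
  ext1 <;> simp [lie_def, ofOne]

theorem ofTwo_lie (s : H.skew) : ⁅(ofTwo s : H.Kantor), X⁆ =
    ⟨0, 0, H.opW s X.negTwo, s * X.negOne, -H.posSkew X.zero s⟩ := by
  ext1 <;> simp [lie_def, ofTwo]

theorem ofNegOne_lie_ofNegTwo (a : A) (r : H.skew) : ⁅(ofNegOne a : H.Kantor), ofNegTwo r⁆ = 0 := by
  rw [ofNegOne_lie]
  simp [ofNegTwo, zero_def]

theorem ofNegTwo_lie_ofNegTwo (r r' : H.skew) : ⁅(ofNegTwo r : H.Kantor), ofNegTwo r'⁆ = 0 := by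
  rw [lie_def]
  simp [ofNegTwo, zero_def]

theorem ofNegOne_lie_ofNegOne (y a : A) :
    ⁅(ofNegOne y : H.Kantor), ofNegOne a⁆ = ofNegTwo (H.psi y a) := by
  rw [ofNegOne_lie]
  simp [ofNegTwo, ofNegOne]

theorem ofOne_lie_ofOne (x a : A) : ⁅(ofOne x : H.Kantor), ofOne a⁆ = ofTwo (H.psi x a) := by
  rw [ofOne_lie]
  simp [ofTwo, ofOne]

theorem ofOne_lie_ofTwo (x : A) (s : H.skew) : ⁅(ofOne x : H.Kantor), ofTwo s⁆ = 0 := by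
  rw [ofOne_lie]
  simp [ofTwo, zero_def]

theorem ofTwo_lie_ofTwo (s r : H.skew) : ⁅(ofTwo s : H.Kantor), ofTwo r⁆ = 0 := by
  rw [ofTwo_lie]
  simp [ofTwo, zero_def]

theorem grading_lie_ofNegOne (a : A) :
    ⁅ofZero H.grading, (ofNegOne a : H.Kantor)⁆ = -ofNegOne a := by
  rw [← map_neg, ← H.neg_grading, ofZero_lie]
  simp [ofNegOne]

/-- The involution of the Kantor Lie algebra that reverses the grading. -/
def reflect : H.Kantor := ⟨X.two, X.one, H.swap X.zero, X.negOne, X.negTwo⟩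

theorem reflect_lie : ⁅X, Y⁆.reflect = ⁅X.reflect, Y.reflect⁆ := by
  ext1
  case zero =>
    simp only [lie_def, reflect, map_add, map_sub, swap_lie, swap_opV, swap_opW]
    abel
  all_goals rfl

variable [NeZero (2 : k)]

theorem leibniz_lie_two : ⁅X, ⁅Y, Z⁆⁆.two = ⁅⁅X, Y⁆, Z⁆.two + ⁅Y, ⁅X, Z⁆⁆.two := by
  simp only [lie_def, map_add, map_sub, LinearMap.add_apply, LinearMap.sub_apply, posSkew_lie,
    posSkew_psi, posSkew_opV]
  rw [H.posSkew_opW_comm X.two Y.negTwo, H.posSkew_opW_comm X.two Z.negTwo,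
    H.posSkew_opW_comm Y.two X.negTwo, ← H.neg_psi_swap X.one (H.pos Z.zero Y.one),
    ← H.neg_psi_swap Y.one (H.pos Z.zero X.one)]
  simp only [← H.neg_psi_swap Z.one]
  abel

theorem leibniz_lie_one : ⁅X, ⁅Y, Z⁆⁆.one = ⁅⁅X, Y⁆, Z⁆.one + ⁅Y, ⁅X, Z⁆⁆.one := by
  simp only [lie_def, Submodule.coe_add, Submodule.coe_sub, map_add, map_sub, add_mul, sub_mul,
    mul_add, mul_sub, LinearMap.add_apply, LinearMap.sub_apply, pos_lie, pos_skew_mul, pos_opV,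
    pos_opW, psi_mul]
  abel

theorem leibniz_lie_zero : ⁅X, ⁅Y, Z⁆⁆.zero = ⁅⁅X, Y⁆, Z⁆.zero + ⁅Y, ⁅X, Z⁆⁆.zero := by
  have h (T : H.degZero) (s t : H.skew) : ⁅H.opW s t, T⁆ = -⁅T, H.opW s t⁆ := (lie_skew _ _).symm
  have h' (T : H.degZero) (x y : A) : ⁅H.opV x y, T⁆ = -⁅T, H.opV x y⁆ := (lie_skew _ _).symm
  simp only [lie_def, leibniz_lie X.zero Y.zero Z.zero, h, h', lie_add, lie_sub, add_lie,
    sub_lie, lie_opV, lie_opW, map_add, map_sub, LinearMap.add_apply, LinearMap.sub_apply,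
    opW_psi_left, opW_psi_right]
  abel

theorem leibniz_lie_kantor : ⁅X, ⁅Y, Z⁆⁆ = ⁅⁅X, Y⁆, Z⁆ + ⁅Y, ⁅X, Z⁆⁆ := by
  have h₁ := leibniz_lie_one X.reflect Y.reflect Z.reflect
  have h₂ := leibniz_lie_two X.reflect Y.reflect Z.reflect
  simp only [← reflect_lie] at h₁ h₂
  exact Kantor.ext h₂ h₁ (leibniz_lie_zero X Y Z) (leibniz_lie_one X Y Z) (leibniz_lie_two X Y Z)

instance : LieRing H.Kantor where
  add_lie X Y Z := by
    ext1 <;> simp only [lie_def, add_def, Submodule.coe_add, map_add, LinearMap.add_apply, add_lie,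
      add_mul, mul_add] <;> abel
  lie_add X Y Z := by
    ext1 <;> simp only [lie_def, add_def, Submodule.coe_add, map_add, LinearMap.add_apply, lie_add,
      add_mul, mul_add] <;> abel
  lie_self X := by ext1 <;> simp [lie_def, zero_def, psi_self]
  leibniz_lie X Y Z := leibniz_lie_kantor X Y Z

instance : LieAlgebra k H.Kantor where
  lie_smul c X Y := by
    ext1 <;> simp only [lie_def, smul_def, Submodule.coe_smul, map_smul, LinearMap.smul_apply,
      lie_smul, smul_mul_assoc, mul_smul_comm, smul_add, smul_sub]

/-- The derivations `ad x` and `-ad s` of the Kantor Lie algebra attached to `(x, s) ∈ A × S`. -/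
def adPair (x : A) (s : H.skew) : DerivationPair k H.Kantor where
  D := LieDerivation.ad k H.Kantor (ofOne x)
  S := -LieDerivation.ad k H.Kantor (ofTwo s)
  S_D v := by
    simp only [LieDerivation.neg_apply, LieDerivation.ad_apply_apply, lie_neg,
      leibniz_lie (ofOne x : H.Kantor) (ofTwo s), ofOne_lie_ofTwo, zero_lie, zero_add]

section Action

variable (x : A) (s r : H.skew) (a : A) (T : H.degZero)

theorem D_adPair (v : H.Kantor) : (adPair x s).D v = ⁅(ofOne x : H.Kantor), v⁆ := by
  rw [adPair, LieDerivation.ad_apply_apply]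

theorem S_adPair (v : H.Kantor) : (adPair x s).S v = -⁅(ofTwo s : H.Kantor), v⁆ := by
  rw [adPair, LieDerivation.neg_apply, LieDerivation.ad_apply_apply]

theorem D_ofNegTwo : (adPair x s).D (ofNegTwo r) = ofNegOne (-(r * x)) := by
  rw [D_adPair, ofOne_lie]
  simp [ofNegTwo, ofNegOne]

theorem D_ofNegOne : (adPair x s).D (ofNegOne a) = ofZero (H.opV x a) := by
  rw [D_adPair, ofOne_lie]
  simp [ofZero, ofNegOne]

theorem D_ofZero : (adPair x s).D (ofZero T) = ofOne (-H.pos T x) := by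
  rw [D_adPair, ofOne_lie]
  simp [ofZero, ofOne]

theorem D_ofOne : (adPair x s).D (ofOne a) = ofTwo (H.psi x a) := by
  rw [D_adPair, ofOne_lie_ofOne]

theorem D_ofTwo : (adPair x s).D (ofTwo r) = 0 := by
  rw [D_adPair, ofOne_lie_ofTwo]

theorem S_ofNegTwo : (adPair x s).S (ofNegTwo r) = ofZero (-H.opW s r) := by
  rw [S_adPair, ofTwo_lie, map_neg]
  simp [ofNegTwo, ofZero]

theorem S_ofNegOne : (adPair x s).S (ofNegOne a) = ofOne (-(s * a)) := by
  rw [S_adPair, ofTwo_lie, map_neg]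
  simp [ofNegOne, ofOne]

theorem S_ofZero : (adPair x s).S (ofZero T) = ofTwo (H.posSkew T s) := by
  rw [S_adPair, neg_eq_iff_eq_neg, ← map_neg, ofTwo_lie]
  simp [ofTwo, ofZero, -map_neg]

theorem S_ofOne : (adPair x s).S (ofOne a) = 0 := by
  rw [S_adPair, ← lie_skew, ofOne_lie_ofTwo, neg_neg]

theorem S_ofTwo : (adPair x s).S (ofTwo r) = 0 := by
  rw [S_adPair, ofTwo_lie_ofTwo, neg_zero]

theorem killsWeightFour_ofNegOne : (adPair x s).KillsWeightFour (ofNegOne a) := by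
  constructor <;> simp only [D_ofNegOne, D_ofZero, D_ofOne, D_ofTwo, S_ofNegOne, S_ofOne]

theorem killsWeightFive_ofNegTwo : (adPair x s).KillsWeightFive (ofNegTwo r) := by
  constructor <;> simp only [D_ofNegTwo, D_ofNegOne, D_ofZero, D_ofOne, D_ofTwo, S_ofNegTwo,
    S_ofZero, S_ofTwo]

end Action

section Identities

variable {x : A} (s : H.skew) (a : A) (r r' : H.skew)

theorem isLowering_adPair {y : A} (h : ∀ z, strTrip bar x y z = z) :
    IsLowering (adPair x s).D (LieDerivation.ad k H.Kantor (ofNegOne y))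
      (LieDerivation.ad k H.Kantor (ofZero H.grading)) where
  F_D v := by
    have e : ⁅(ofOne x : H.Kantor), ofNegOne y⁆ = ofZero H.grading := by
      rw [← D_adPair x s, D_ofNegOne, H.opV_eq_grading h]
    rw [D_adPair, D_adPair, LieDerivation.ad_apply_apply, LieDerivation.ad_apply_apply,
      LieDerivation.ad_apply_apply, ← e, lie_lie, sub_sub_cancel]
  Z_D v := by
    have e : ⁅ofZero H.grading, (ofOne x : H.Kantor)⁆ = ofOne x := by
      rw [← lie_skew, ← D_adPair x s, D_ofZero, map_neg, neg_neg, pos_grading]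
    rw [D_adPair, D_adPair, LieDerivation.ad_apply_apply, LieDerivation.ad_apply_apply,
      leibniz_lie, e, add_comm]

theorem grading_lie_ofNegTwo :
    ⁅ofZero H.grading, (ofNegTwo r : H.Kantor)⁆ = -(2 • ofNegTwo r) := by
  rw [← map_nsmul, ← map_neg, ← H.negSkew_grading, ofZero_lie]
  simp [ofNegTwo]

theorem grading_lie_ofTwo : ⁅ofZero H.grading, (ofTwo r : H.Kantor)⁆ = 2 • ofTwo r := by
  rw [← map_nsmul, ← H.posSkew_grading, ofZero_lie]
  simp [ofTwo]

theorem lie_weight_five (hx : (5 : k) = 0 → x ≠ 0 → ∃ y, ∀ z, strTrip bar x y z = z) :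
    ⁅(adPair x s).D (ofNegOne a), (adPair x s).expFour (ofNegTwo r)⁆
      + 2 • ⁅(adPair x s).expTwo (ofNegOne a), (adPair x s).expThree (ofNegTwo r)⁆
      + 2 • ⁅(adPair x s).expThree (ofNegOne a), (adPair x s).expTwo (ofNegTwo r)⁆ = 0 := by
  have ha := killsWeightFour_ofNegOne x s a
  have hr := killsWeightFive_ofNegTwo x s r
  have har := ofNegOne_lie_ofNegTwo a r
  refine DerivationPair.exp_lie_weight_five ha hr har ?_
  by_cases h5 : (5 : k) = 0
  · obtain rfl | hx₀ := eq_or_ne x 0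
    · simp [D_adPair]
    obtain ⟨y, hy⟩ := hx h5 hx₀
    refine (isLowering_adPair s hy).weight_five three_ne_zero ?_ ?_ ?_ ha.DDDD ?_ ?_ ?_ ?_ ?_ <;>
    simp only [LieDerivation.ad_apply_apply, ofNegOne_lie_ofNegOne,
      ofNegOne_lie_ofNegTwo, grading_lie_ofNegOne, grading_lie_ofNegTwo,
      D_ofNegTwo, D_ofNegOne, D_ofZero, D_ofOne, ofOne_lie_ofTwo]
  · exact DerivationPair.weight_five_of_five_ne_zero h5 ha hr har

theorem lie_weight_six (hx : (5 : k) = 0 → x ≠ 0 → ∃ y, ∀ z, strTrip bar x y z = z) :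
    3 • ⁅(adPair x s).expTwo (ofNegTwo r), (adPair x s).expFour (ofNegTwo r')⁆
      + 4 • ⁅(adPair x s).expThree (ofNegTwo r), (adPair x s).expThree (ofNegTwo r')⁆
      + 3 • ⁅(adPair x s).expFour (ofNegTwo r), (adPair x s).expTwo (ofNegTwo r')⁆ = 0 := by
  have hr := killsWeightFive_ofNegTwo x s r
  have hr' := killsWeightFive_ofNegTwo x s r'
  have hrr' := ofNegTwo_lie_ofNegTwo r r'
  refine DerivationPair.exp_lie_weight_six hr hr' hrr' ?_
  by_cases h5 : (5 : k) = 0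
  · obtain rfl | hx₀ := eq_or_ne x 0
    · simp [D_adPair]
    obtain ⟨y, hy⟩ := hx h5 hx₀
    refine (isLowering_adPair s hy).weight_six ?_ ?_ ?_ ?_ ?_ ?_ <;>
    simp only [LieDerivation.ad_apply_apply, ofNegOne_lie_ofNegTwo, grading_lie_ofNegTwo,
      D_ofNegTwo, D_ofNegOne, D_ofZero, D_ofOne, ofOne_lie_ofTwo]
  · exact DerivationPair.weight_six_of_five_ne_zero h5 hr hr' hrr'

end Identities

/-! ### One-invertibility -/

section Coefficients

open DerivationPair (expTwo expThree expFour)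

variable (x : A) (s : H.skew) (a : A) (r : H.skew)

theorem expTwo_ofNegOne :
    (adPair x s).expTwo (ofNegOne a) = ofOne (-(H.triple x a x + s * a)) := by
  rw [expTwo, D_ofNegOne, D_ofZero, S_ofNegOne, pos_opV, ← map_add, neg_add]

theorem expThree_ofNegOne : (adPair x s).expThree (ofNegOne a) =
    ofTwo (-(H.psi x (H.triple x a x) + 3 • H.psi x (s * a))) := by
  rw [expThree, D_ofNegOne, D_ofZero, D_ofOne, S_ofNegOne, D_ofOne, pos_opV, ← map_nsmul,
    ← map_add, map_neg, map_neg, smul_neg, neg_add]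

theorem DDD_ofNegTwo : (adPair x s).D ((adPair x s).D ((adPair x s).D (ofNegTwo r))) =
    ofOne (H.triple x (r * x) x) := by
  simp only [D_ofNegTwo, D_ofNegOne, D_ofZero, pos_opV, map_neg, neg_neg]

theorem DS_ofNegTwo : (adPair x s).D ((adPair x s).S (ofNegTwo r)) = ofOne (s * (r * x)) := by
  simp only [S_ofNegTwo, D_ofZero, pos_opW, map_neg, neg_neg]

theorem expThree_ofNegTwo : (adPair x s).expThree (ofNegTwo r) =
    ofOne (H.triple x (r * x) x + 3 • (s * (r * x))) := by
  rw [expThree, DDD_ofNegTwo, DS_ofNegTwo, map_add, map_nsmul]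

theorem expFour_ofNegTwo : (adPair x s).expFour (ofNegTwo r) =
    ofTwo (H.psi x (H.triple x (r * x) x) + 6 • H.psi x (s * (r * x))
      - 3 • H.posSkew (H.opW s r) s) := by
  rw [expFour, DDD_ofNegTwo, DS_ofNegTwo, D_ofOne, D_ofOne, S_ofNegTwo, S_ofZero]
  simp only [map_neg, LinearMap.neg_apply, map_add, map_sub, map_nsmul]
  module

theorem expTwo_sub_expThree (z : A) :
    3 • (adPair x s).expTwo (ofNegOne a) - 2 • (adPair x s).expThree (ofNegTwo (H.psi z a)) =
      ofOne (-(3 • strP k bar x s z a)) := by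
  rw [expTwo_ofNegOne, expThree_ofNegTwo, ← map_nsmul, ← map_nsmul, ← map_sub]
  simp only [strP, ← H.coe_psi, ← H.triple_apply, map_add, map_smul, LinearMap.add_apply,
    LinearMap.smul_apply, mul_add, mul_smul_comm]
  have h3 : (3 : k) ≠ 0 := three_ne_zero
  congr 1
  match_scalars <;> field_simp

end Coefficients

section OneInverse

variable {x u : A} {s t : H.skew}

theorem isOneInverse_adPair (hu : ∀ z, strTrip bar x u z = z + s * (t * z))
    (hsu : s * u = -((3 : k)⁻¹ • strTrip bar x (t * x) x))
    (hψ : strPsi bar x (s * (t * x)) = 0) :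
    (adPair x s).IsOneInverse (ofOne x) (ofTwo s) (ofZero H.grading) (ofNegOne (u + t * x))
      (ofNegTwo t) := by
  refine .of_expTwo ?_ ?_ ?_ ?_ ?_ ?_
  · rw [DerivationPair.expTwo, D_ofNegOne, D_ofNegTwo, D_ofNegOne, S_ofNegTwo, ← map_add,
      ← map_add]
    congr 1
    refine H.eq_of_pos_eq fun z => ?_
    simp only [map_add, map_neg, LinearMap.add_apply, LinearMap.neg_apply, pos_opV, pos_opW,
      pos_grading, H.triple_apply x u, hu]
    abel
  · rw [D_ofZero, pos_grading, map_neg]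
  · rw [D_ofOne, psi_self, map_zero]
  · rw [S_ofZero, posSkew_grading, map_nsmul]
  · rw [S_ofNegOne, DDD_ofNegTwo, DS_ofNegTwo, mul_add, hsu, triple_apply, ← map_nsmul,
      ← map_nsmul, ← map_sub]
    have h3 : (3 : k) ≠ 0 := three_ne_zero
    congr 1
    match_scalars <;> field_simp
  · have hψ' : H.psi x (s * (t * x)) = 0 := Subtype.ext hψ
    rw [DS_ofNegTwo, D_ofOne, hψ', map_zero]

variable {z : A}

theorem expFour_ofNegTwo_psi (hx : (5 : k) = 0 → x ≠ 0 → ∃ y, ∀ a, strTrip bar x y a = a)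
    (h : (adPair x s).IsOneInverse (ofOne x) (ofTwo s) (ofZero H.grading) (ofNegOne z)
      (ofNegTwo t)) (a : A) :
    (adPair x s).expFour (ofNegTwo (H.psi z a)) = 2 • (adPair x s).expThree (ofNegOne a) := by
  rw [← ofNegOne_lie_ofNegOne]
  refine h.expFour_lie (D_adPair x s) (S_adPair x s) (killsWeightFour_ofNegOne x s z)
    (killsWeightFour_ofNegOne x s a) ?_ (lie_weight_five s a t hx)
  rw [expThree_ofNegOne, grading_lie_ofTwo]

theorem psi_strP (hx : (5 : k) = 0 → x ≠ 0 → ∃ y, ∀ a, strTrip bar x y a = a)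
    (h : (adPair x s).IsOneInverse (ofOne x) (ofTwo s) (ofZero H.grading) (ofNegOne z)
      (ofNegTwo t)) (r : H.skew) :
    3 • H.psi (strP k bar x s z r) (strP k bar x s z 1) =
      H.psi x (H.triple x (r * x) x) + 6 • H.psi x (s * (r * x))
        - 3 • H.posSkew (H.opW s r) s := by
  have e := (adPair x s).lie_expTwo_sub (killsWeightFour_ofNegOne x s r)
    (killsWeightFour_ofNegOne x s 1) (expFour_ofNegTwo_psi hx h r)
    (expFour_ofNegTwo_psi hx h 1) (lie_weight_five s r _ hx) (lie_weight_five s 1 _ hx)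
    (lie_weight_six s _ _ hx)
  rw [expTwo_sub_expThree, expTwo_sub_expThree, ofOne_lie_ofOne, ofNegOne_lie_ofNegOne,
    psi_skew_one, expFour_ofNegTwo, ← map_nsmul ofTwo, ← map_nsmul ofTwo,
    ofTwo_injective.eq_iff] at e
  have h6 : (6 : k) ≠ 0 := by
    rw [show (6 : k) = 2 * 3 by norm_num]
    exact mul_ne_zero two_ne_zero three_ne_zero
  simp only [Submodule.coe_smul, smul_mul_assoc, mul_smul_comm, map_smul, map_neg, map_nsmul,
    LinearMap.smul_apply, LinearMap.neg_apply] at e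
  rw [← sub_eq_zero, ← smul_eq_zero_iff_right h6]
  linear_combination (norm := module) e

end OneInverse

end Kantor

end DegreeZero

end IsStructurable

theorem stmt16_general {k : Type*} [Field k] {A : Type*} [NonAssocRing A] [Module k A]
    [SMulCommClass k A A] [IsScalarTower k A A] (h2 : (2 : k) ≠ 0) (h3 : (3 : k) ≠ 0)
    (bar : A → A) (hstr : IsStructurable k A bar) (x s : A)
    (hx : (5 : k) = 0 → x ≠ 0 → ∃ y, ∀ z, strTrip bar x y z = z) (hsS : bar s = -s)
    (u t : A) (htS : bar t = -t)
    (hsys1 : ∀ z : A, strTrip bar x u z = z + s * (t * z))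
    (hsys2 : s * u = -((3 : k)⁻¹ • strTrip bar x (t * x) x))
    (hsys3 : strPsi bar x (s * (t * x)) = 0) :
    ∀ r : A, bar r = -r →
      (6 : k)⁻¹ • strPsi bar x (strTrip bar x (r * x) x)
          + strPsi bar x (s * (r * x)) - s * (r * s)
        = (2 : k)⁻¹ • strPsi bar (strP k bar x s (u + t * x) r)
            (strP k bar x s (u + t * x) 1) := by
  intro r hr
  have : NeZero (2 : k) := ⟨h2⟩
  have : NeZero (3 : k) := ⟨h3⟩
  lift s to hstr.skew using hsS
  lift t to hstr.skew using htS
  lift r to hstr.skew using hr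
  have h := IsStructurable.Kantor.isOneInverse_adPair hsys1 hsys2 hsys3
  have e := congrArg Subtype.val (IsStructurable.Kantor.psi_strP hx h r)
  simp only [Submodule.coe_sub, Submodule.coe_add, Submodule.coe_smul_of_tower,
    hstr.coe_posSkew_opW_self, hstr.coe_psi, hstr.triple_apply] at e
  have h6 : (6 : k) = 2 * 3 := by norm_num
  linear_combination (norm := skip) (-(6 : k)⁻¹) • e
  rw [h6]
  match_scalars <;> field_simp <;> ring

/-- Let `A` be a structurable division algebra over a field `k` with
`char k ≠ 2, 3`, let `(x,s) ∈ A × S` with `(x,s) ≠ (0,0)`, and let `(u,t) ∈ A × S`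
satisfy the one-invertibility system.  With `z₀ := u + t·x` and
`P(a) := U_x(a + (2/3)·ψ(z₀,a)·x) + s·(a + 2·ψ(z₀,a)·x)`, for every `r ∈ S` one has
`(1/6)·ψ(x, U_x(r·x)) + ψ(x, s·(r·x)) − s·(r·s) = (1/2)·ψ(P(r), P(1))`. -/
theorem stmt16 {k : Type*} [Field k] {A : Type*} [NonAssocRing A] [Module k A]
    [SMulCommClass k A A] [IsScalarTower k A A] [FiniteDimensional k A] [Nontrivial A]
    (h2 : (2 : k) ≠ 0) (h3 : (3 : k) ≠ 0)
    (bar : A → A) (hstr : IsStructurable k A bar) (hdiv : IsConjDivision bar)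
    (x s : A) (hsS : bar s = -s) (hxs : ¬(x = 0 ∧ s = 0))
    (u t : A) (htS : bar t = -t)
    (hsys1 : ∀ z : A, strTrip bar x u z = z + s * (t * z))
    (hsys2 : s * u = -((3 : k)⁻¹ • strTrip bar x (t * x) x))
    (hsys3 : strPsi bar x (s * (t * x)) = 0) :
    ∀ r : A, bar r = -r →
      (6 : k)⁻¹ • strPsi bar x (strTrip bar x (r * x) x)
          + strPsi bar x (s * (r * x)) - s * (r * s)
        = (2 : k)⁻¹ • strPsi bar (strP k bar x s (u + t * x) r)
            (strP k bar x s (u + t * x) 1) :=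
  stmt16_general h2 h3 bar hstr x s (fun _ hx => hdiv x hx) hsS u t htS hsys1 hsys2 hsys3
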